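/- For every integer n ≥ 2, every real μ > 1, and every integer m ≥ 1, the symbol A^{(n,m)} is a Hurwitz polynomial: every z ∈ ℂ with A^{(n,m)}(z) = 0 satisfies Re z < 0. -/

import Mathlib

open MeasureTheory Filter Complex

/-- Binomial coefficient `binom p q` extended to integer `q`, zero outside `0 ≤ q ≤ p`. -/
noncomputable def binomZ (p : ℕ) (q : ℤ) : ℝ :=
  if 0 ≤ q then (p.choose q.toNat : ℝ) else 0

/-- The nonstationary mask `a^{(n,m)}_α` with tension parameter `μ`. -/
noncomputable def maskNS (n m : ℕ) (μ : ℝ) (α : ℤ) : ℝ :=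
  if m = 0 then (if α = 0 ∨ α = 1 then 1/2 else 0)
  else if 0 ≤ α ∧ α ≤ (n : ℤ) + 1 then
    (2 : ℝ) ^ (-((n : ℝ) + 1 + (m : ℝ) ^ (-μ))) *
      (binomZ (n+1) α + 4 * ((2 : ℝ) ^ ((m : ℝ) ^ (-μ)) - 1) * binomZ (n-1) (α-1))
  else 0

/-- The symbol `A^{(n,m)}(z) = Σ_{α=0}^{n+1} a^{(n,m)}_α z^α`. -/
noncomputable def symbolNS (n m : ℕ) (μ : ℝ) (z : ℂ) : ℂ :=
  ∑ α ∈ Finset.range (n+2), (maskNS n m μ (α : ℤ) : ℂ) * z ^ α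

/-!
For `m ≥ 1`, the binomial theorem applied to both parts of the mask writes the symbol as a positive
constant times `(z + 1) ^ (n - 1) * (z ^ 2 + (2 + 4 * t) * z + 1)`, where
`t = 2 ^ (m ^ (-μ)) - 1 > 0`. The first factor vanishes only at `-1`, and a real quadratic with
positive coefficients is Hurwitz.
-/

section GeneratingFunctions

variable {A : Type*} [CommSemiring A] [Algebra ℝ A]

theorem binomZ_natCast (p q : ℕ) : binomZ p q = p.choose q := by
  simp [binomZ]

theorem binomZ_of_neg (p : ℕ) {q : ℤ} (hq : q < 0) : binomZ p q = 0 :=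
  if_neg hq.not_ge

theorem sum_range_binomZ_smul_pow {p N : ℕ} (hN : p < N) (z : A) :
    ∑ α ∈ Finset.range N, binomZ p α • z ^ α = (z + 1) ^ p := by
  have choose_eq_zero (α : ℕ) (_ : α ∈ Finset.range N) (hα : α ∉ Finset.range (p + 1)) :
      binomZ p α • z ^ α = 0 := by
    rw [binomZ_natCast, Nat.choose_eq_zero_of_lt (by simpa using hα), Nat.cast_zero, zero_smul]
  rw [← Finset.sum_subset (Finset.range_mono hN) choose_eq_zero, add_pow]
  simp [binomZ_natCast, Algebra.smul_def, mul_comm]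

theorem sum_range_binomZ_sub_one_smul_pow {p N : ℕ} (hN : p < N) (z : A) :
    ∑ α ∈ Finset.range (N + 1), binomZ p (α - 1) • z ^ α = z * (z + 1) ^ p := by
  rw [Finset.sum_range_succ', ← sum_range_binomZ_smul_pow hN z, Finset.mul_sum]
  simp [binomZ_of_neg, pow_succ']

end GeneratingFunctions

theorem maskNS_natCast {n m α : ℕ} (hm : m ≠ 0) (hα : α ≤ n + 1) (μ : ℝ) :
    maskNS n m μ α = (2 : ℝ) ^ (-((n : ℝ) + 1 + (m : ℝ) ^ (-μ))) *
      (binomZ (n + 1) α + 4 * ((2 : ℝ) ^ ((m : ℝ) ^ (-μ)) - 1) * binomZ (n - 1) (α - 1)) := by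
  rw [maskNS, if_neg hm, if_pos ⟨by positivity, by exact_mod_cast hα⟩]

theorem symbolNS_zero (n : ℕ) (μ : ℝ) (z : ℂ) : symbolNS n 0 μ z = (z + 1) / 2 := by
  have maskNS_add_two (α : ℕ) : maskNS n 0 μ ((α + 2 : ℕ) : ℤ) = 0 := by
    rw [maskNS, if_pos rfl, if_neg (by omega)]
  rw [symbolNS, Finset.sum_range_succ', Finset.sum_range_succ']
  simp only [add_assoc, Nat.reduceAdd, maskNS_add_two]
  simp [maskNS, div_eq_inv_mul, mul_add]

theorem symbolNS_succ_of_ne_zero (n : ℕ) {m : ℕ} (hm : m ≠ 0) (μ : ℝ) (z : ℂ) :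
    symbolNS (n + 1) m μ z =
      ((2 : ℝ) ^ (-(((n + 1 : ℕ) : ℝ) + 1 + (m : ℝ) ^ (-μ))) : ℝ) * ((z + 1) ^ n *
        (z ^ 2 + (2 + 4 * ((2 : ℝ) ^ ((m : ℝ) ^ (-μ)) - 1) : ℝ) * z + 1)) := by
  set c : ℝ := (2 : ℝ) ^ (-(((n + 1 : ℕ) : ℝ) + 1 + (m : ℝ) ^ (-μ))) with hc
  set t : ℝ := (2 : ℝ) ^ ((m : ℝ) ^ (-μ)) - 1 with ht
  have mask_term (α : ℕ) (hα : α ∈ Finset.range (n + 3)) :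
      (maskNS (n + 1) m μ α : ℂ) * z ^ α =
        c * (binomZ (n + 2) α • z ^ α) + c * (4 * t) * (binomZ n (α - 1) • z ^ α) := by
    rw [maskNS_natCast hm (by simpa [Nat.lt_succ_iff] using hα), ← hc, ← ht,
      Nat.add_sub_cancel, real_smul, real_smul]
    push_cast
    ring
  rw [symbolNS, Finset.sum_congr rfl mask_term, Finset.sum_add_distrib, ← Finset.mul_sum,
    ← Finset.mul_sum, sum_range_binomZ_smul_pow (by omega),
    sum_range_binomZ_sub_one_smul_pow (by omega)]
  push_cast
  ring

theorem re_neg_of_quadratic_eq_zero {a b c : ℝ} (ha : 0 ≤ a) (hb : 0 < b) (hc : 0 < c) {z : ℂ}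
    (hz : a * z ^ 2 + b * z + c = 0) : z.re < 0 := by
  by_contra! hre
  have real_part : a * (z.re ^ 2 - z.im ^ 2) + b * z.re + c = 0 := by
    simpa [pow_two] using congrArg re hz
  have imag_part : z.im * (2 * a * z.re + b) = 0 := by
    have := congrArg im hz
    simp only [pow_two, add_im, mul_im, mul_re, ofReal_re, ofReal_im, zero_im] at this
    linarith
  have him : z.im = 0 := (mul_eq_zero.1 imag_part).resolve_right (by positivity)
  have pos : 0 < a * z.re ^ 2 + b * z.re + c := by positivity
  rw [him] at real_part
  linarith

theorem re_neg_of_add_one_eq_zero {z : ℂ} (hz : z + 1 = 0) : z.re < 0 := by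
  simp [eq_neg_of_add_eq_zero_left hz]

theorem symbolNS_hurwitz_general (n : ℕ) (hn : 1 ≤ n) (μ : ℝ) (m : ℕ) (z : ℂ)
    (hz : symbolNS n m μ z = 0) : z.re < 0 := by
  obtain ⟨n, rfl⟩ := Nat.exists_eq_add_of_le' hn
  rcases eq_or_ne m 0 with rfl | hm
  · rw [symbolNS_zero] at hz
    exact re_neg_of_add_one_eq_zero (by simpa using hz)
  have tension_nonneg : 0 ≤ (2 : ℝ) ^ ((m : ℝ) ^ (-μ)) - 1 :=
    sub_nonneg.2 (Real.one_le_rpow one_le_two (by positivity))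
  have scale_ne_zero : (((2 : ℝ) ^ (-(((n + 1 : ℕ) : ℝ) + 1 + (m : ℝ) ^ (-μ))) : ℝ) : ℂ) ≠ 0 :=
    ofReal_ne_zero.2 (by positivity)
  rw [symbolNS_succ_of_ne_zero n hm] at hz
  rcases mul_eq_zero.1 ((mul_eq_zero.1 hz).resolve_left scale_ne_zero) with linear | quadratic
  · exact re_neg_of_add_one_eq_zero (eq_zero_of_pow_eq_zero linear)
  · refine re_neg_of_quadratic_eq_zero zero_le_one (by positivity) one_pos
      (b := 2 + 4 * ((2 : ℝ) ^ ((m : ℝ) ^ (-μ)) - 1)) ?_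
    rwa [ofReal_one, one_mul]

/-- The symbol `A^{(n,m)}` is a Hurwitz polynomial: all its zeros have negative real part. -/
theorem symbolNS_hurwitz (n : ℕ) (hn : 2 ≤ n) (μ : ℝ) (hμ : 1 < μ)
    (m : ℕ) (hm : 1 ≤ m) :
    ∀ z : ℂ, symbolNS n m μ z = 0 → z.re < 0 :=
  symbolNS_hurwitz_general n (one_le_two.trans hn) μ m
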